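/- There exists ε_0 ∈ (0, 1/2), independent of d and n, such that for every d ≥ 1, every n ≥ 1, and every adaptive algorithm A using n function values, sup over convex f : [0,1]^d → [0,1] of |INT_d(f) − A(f)| ≥ ε_0·(1 − (d+1)·n·(10/11)^d). -/

import Mathlib

/-!
The bound comes from two convex functions which the algorithm cannot distinguish. Run the algorithm
on the paraboloid `f₀(x) = 1/2 + |x|²/(2d)` and let `s₁, …, sₙ` be the points where it samples. The
maximum `g` of the tangent planes of `f₀` at the `sₖ` is convex, takes values in `[0,1]`, and agrees
with `f₀` at every `sₖ`, so the algorithm gives the same output for `f₀` and `g`.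

Since `f₀` is quadratic, `f₀(x) - g(x) = minₖ |x - sₖ|²/(2d)`. Most points of the cube have squared
distance at least `d/32` from all the `sₖ`: by the exponential Markov inequality, the points closer
than that to a fixed `s` have measure at most `(e^{1/2} ∫ e^{-16u²} du)^d = (e^{1/2} √(π/16))^d`,
which is below `(10/11)^d`. Hence `∫ (f₀ - g) ≥ (1 - n (10/11)^d)/64`, and the common output is
off by at least half of this for one of the two functions.
-/

open MeasureTheory

/-- The adaptively computed information values `y_k = f(t_k(y_1,…,y_{k-1}))`. -/
noncomputable def infoValues {d n : ℕ}
    (t : (k : Fin n) → (Fin k.1 → ℝ) → (Fin d → ℝ))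
    (f : (Fin d → ℝ) → ℝ) (k : Fin n) : ℝ :=
  f (t k (fun j => infoValues t f ⟨j.1, j.2.trans k.2⟩))
termination_by k.1

/-- The paraboloid `1/2 + |x|²/(2d)`, which maps the unit cube into `[1/2, 1]`. -/
noncomputable def parab (d : ℕ) (x : Fin d → ℝ) : ℝ :=
  1 / 2 + (∑ i, x i ^ 2) / (2 * d)

/-- The tangent plane of `parab d` at the point `s`. -/
noncomputable def tangentPlane (d : ℕ) (s x : Fin d → ℝ) : ℝ :=
  1 / 2 + (∑ i, (2 * s i * x i - s i ^ 2)) / (2 * d)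

lemma tangentPlane_self {d : ℕ} (s : Fin d → ℝ) : tangentPlane d s s = parab d s := by
  unfold tangentPlane parab
  congr 2
  exact Finset.sum_congr rfl fun i _ => by ring

lemma parab_sub_tangentPlane {d : ℕ} (s x : Fin d → ℝ) :
    parab d x - tangentPlane d s x = (∑ i, (x i - s i) ^ 2) / (2 * d) := by
  unfold tangentPlane parab
  rw [add_sub_add_left_eq_sub, ← sub_div, ← Finset.sum_sub_distrib]
  congr 1
  exact Finset.sum_congr rfl fun i _ => by ring

lemma tangentPlane_le_parab {d : ℕ} (s x : Fin d → ℝ) : tangentPlane d s x ≤ parab d x := by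
  have h := parab_sub_tangentPlane s x
  have : 0 ≤ (∑ i, (x i - s i) ^ 2) / (2 * (d : ℝ)) := by positivity
  linarith

lemma tangentPlane_combo {d : ℕ} (s x y : Fin d → ℝ) {a b : ℝ} (hab : a + b = 1) :
    tangentPlane d s (a • x + b • y) = a * tangentPlane d s x + b * tangentPlane d s y := by
  have h : ∑ i, (2 * s i * (a • x + b • y) i - s i ^ 2) =
      a * ∑ i, (2 * s i * x i - s i ^ 2) + b * ∑ i, (2 * s i * y i - s i ^ 2) := by
    rw [Finset.mul_sum, Finset.mul_sum, ← Finset.sum_add_distrib]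
    refine Finset.sum_congr rfl fun i _ => ?_
    simp only [Pi.add_apply, Pi.smul_apply, smul_eq_mul]
    linear_combination (s i ^ 2) * hab
  unfold tangentPlane
  rw [h]
  linear_combination (-1 / 2 : ℝ) * hab

lemma convexOn_parab (d : ℕ) : ConvexOn ℝ (Set.Icc (0 : Fin d → ℝ) 1) (parab d) := by
  refine ⟨convex_Icc _ _, fun x _ y _ a b ha hb hab => ?_⟩
  -- The supporting plane at the convex combination itself gives the inequality.
  set z := a • x + b • y with hz
  calc parab d z = tangentPlane d z (a • x + b • y) := (tangentPlane_self z).symm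
    _ = a * tangentPlane d z x + b * tangentPlane d z y := tangentPlane_combo z x y hab
    _ ≤ a • parab d x + b • parab d y :=
      add_le_add (mul_le_mul_of_nonneg_left (tangentPlane_le_parab z x) ha)
        (mul_le_mul_of_nonneg_left (tangentPlane_le_parab z y) hb)

lemma parab_mem {d : ℕ} (hd : 1 ≤ d) {x : Fin d → ℝ} (hx : x ∈ Set.Icc (0 : Fin d → ℝ) 1) :
    parab d x ∈ Set.Icc (0 : ℝ) 1 := by
  have hd' : (0 : ℝ) < 2 * d := by positivity
  have h1 : ∑ i, x i ^ 2 ≤ d := by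
    calc ∑ i, x i ^ 2 ≤ ∑ _i : Fin d, (1 : ℝ) :=
          Finset.sum_le_sum fun i _ => pow_le_one₀ (hx.1 i) (hx.2 i)
      _ = d := by simp
  have h2 : (∑ i, x i ^ 2) / (2 * d) ≤ 1 / 2 := by
    rw [div_le_iff₀ hd']; linarith
  have h3 : 0 ≤ (∑ i, x i ^ 2) / (2 * (d : ℝ)) := by positivity
  constructor <;> unfold parab <;> linarith

lemma tangentPlane_nonneg {d : ℕ} (hd : 1 ≤ d) {s x : Fin d → ℝ}
    (hs : s ∈ Set.Icc (0 : Fin d → ℝ) 1) (hx : x ∈ Set.Icc (0 : Fin d → ℝ) 1) :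
    0 ≤ tangentPlane d s x := by
  have hd' : (0 : ℝ) < 2 * d := by positivity
  have h1 : -(d : ℝ) ≤ ∑ i, (2 * s i * x i - s i ^ 2) := by
    calc -(d : ℝ) = ∑ _i : Fin d, (-1 : ℝ) := by simp
      _ ≤ _ := Finset.sum_le_sum fun i _ => by
          have a : 0 ≤ s i * x i := mul_nonneg (hs.1 i) (hx.1 i)
          have b : s i ^ 2 ≤ 1 := pow_le_one₀ (hs.1 i) (hs.2 i)
          linarith
  have h2 : -(1 / 2) ≤ (∑ i, (2 * s i * x i - s i ^ 2)) / (2 * (d : ℝ)) := by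
    rw [le_div_iff₀ hd']; linarith
  unfold tangentPlane; linarith

/-- The upper envelope of the tangent planes of `parab d` at the points `s k`. -/
noncomputable def envelope {d n : ℕ} [NeZero n] (s : Fin n → Fin d → ℝ) (x : Fin d → ℝ) : ℝ :=
  Finset.univ.sup' Finset.univ_nonempty fun k => tangentPlane d (s k) x

lemma tangentPlane_le_envelope {d n : ℕ} [NeZero n] (s : Fin n → Fin d → ℝ) (x : Fin d → ℝ)
    (k : Fin n) : tangentPlane d (s k) x ≤ envelope s x :=
  Finset.le_sup' (fun k => tangentPlane d (s k) x) (Finset.mem_univ k)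

lemma envelope_le_parab {d n : ℕ} [NeZero n] (s : Fin n → Fin d → ℝ) (x : Fin d → ℝ) :
    envelope s x ≤ parab d x :=
  Finset.sup'_le _ _ fun k _ => tangentPlane_le_parab (s k) x

lemma envelope_node {d n : ℕ} [NeZero n] (s : Fin n → Fin d → ℝ) (k : Fin n) :
    envelope s (s k) = parab d (s k) :=
  le_antisymm (envelope_le_parab s _)
    ((tangentPlane_self (s k)).symm.le.trans (tangentPlane_le_envelope s _ k))

lemma convexOn_envelope {d n : ℕ} [NeZero n] (s : Fin n → Fin d → ℝ) :
    ConvexOn ℝ (Set.Icc (0 : Fin d → ℝ) 1) (envelope s) := by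
  refine ⟨convex_Icc _ _, fun x _ y _ a b ha hb hab => ?_⟩
  refine Finset.sup'_le _ _ fun k _ => ?_
  rw [tangentPlane_combo _ x y hab]
  exact add_le_add (mul_le_mul_of_nonneg_left (tangentPlane_le_envelope s x k) ha)
    (mul_le_mul_of_nonneg_left (tangentPlane_le_envelope s y k) hb)

lemma continuous_parab (d : ℕ) : Continuous (parab d) := by
  unfold parab; fun_prop

lemma continuous_envelope {d n : ℕ} [NeZero n] (s : Fin n → Fin d → ℝ) :
    Continuous (envelope s) := by
  unfold envelope
  refine Continuous.finset_sup'_apply _ fun k _ => ?_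
  unfold tangentPlane; fun_prop

/-- One-dimensional factor of the exponential Markov bound `exp (d/2 - 16 |x - s|²)` for the
event `|x - s|² ≤ d/32`. -/
noncomputable def bump (a u : ℝ) : ℝ := Real.exp (1 / 2) * Real.exp (-16 * (u - a) ^ 2)

lemma integrable_bump (a : ℝ) : Integrable (bump a) :=
  ((integrable_exp_neg_mul_sq (by norm_num : (0 : ℝ) < 16)).comp_sub_right a).const_mul _

lemma integral_bump_le (a : ℝ) : ∫ u, bump a u ≤ 10 / 11 := by
  have h : ∫ u, bump a u = Real.exp (1 / 2) * √(Real.pi / 16) := by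
    unfold bump
    rw [integral_const_mul, integral_sub_right_eq_self (fun u => Real.exp (-16 * u ^ 2)) a,
      integral_gaussian]
  rw [h]
  refine abs_le_of_sq_le_sq' ?_ (by norm_num) |>.2
  rw [mul_pow, Real.sq_sqrt (by positivity), ← Real.exp_nat_mul]
  have e1 : Real.exp ((2 : ℕ) * (1 / 2)) < 2.7182818286 := by
    rw [show ((2 : ℕ) : ℝ) * (1 / 2) = 1 by norm_num]
    exact Real.exp_one_lt_d9
  have e2 := Real.pi_lt_d2
  calc Real.exp ((2 : ℕ) * (1 / 2)) * (Real.pi / 16) ≤ 2.7182818286 * (3.15 / 16) := by gcongr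
    _ ≤ (10 / 11) ^ 2 := by norm_num

lemma bump_nonneg (a u : ℝ) : 0 ≤ bump a u := by unfold bump; positivity

lemma prod_bump {d : ℕ} (s x : Fin d → ℝ) :
    ∏ i, bump (s i) (x i) = Real.exp (d / 2 - 16 * ∑ i, (x i - s i) ^ 2) := by
  simp only [bump, ← Real.exp_add, ← Real.exp_sum]
  congr 1
  rw [Finset.sum_add_distrib, Finset.mul_sum, sub_eq_add_neg, ← Finset.sum_neg_distrib]
  simp [div_eq_mul_inv]

lemma integrable_prod_bump {d : ℕ} (s : Fin d → ℝ) :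
    Integrable fun x : Fin d → ℝ => ∏ i, bump (s i) (x i) :=
  Integrable.fintype_prod fun i => integrable_bump (s i)

lemma setIntegral_prod_bump_le {d : ℕ} (s : Fin d → ℝ) :
    ∫ x in Set.Icc (0 : Fin d → ℝ) 1, ∏ i, bump (s i) (x i) ≤ (10 / 11) ^ d := by
  calc ∫ x in Set.Icc (0 : Fin d → ℝ) 1, ∏ i, bump (s i) (x i)
      ≤ ∫ x : Fin d → ℝ, ∏ i, bump (s i) (x i) :=
        setIntegral_le_integral (integrable_prod_bump s)
          (.of_forall fun x => Finset.prod_nonneg fun i _ => bump_nonneg _ _)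
    _ = ∏ i, ∫ u, bump (s i) u := integral_fintype_prod_volume_eq_prod fun i => bump (s i)
    _ ≤ ∏ _i : Fin d, (10 / 11 : ℝ) :=
        Finset.prod_le_prod (fun i _ => integral_nonneg (bump_nonneg _))
          fun i _ => integral_bump_le _
    _ = (10 / 11) ^ d := by rw [Finset.prod_const, Finset.card_univ, Fintype.card_fin]

/-- The gap is at least `1/64` at points far from all nodes; near a node the right-hand side is
nonpositive because the corresponding product is at least `1`. -/
lemma gap_lower_bound {d n : ℕ} [NeZero n] (hd : 1 ≤ d) (s : Fin n → Fin d → ℝ)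
    (x : Fin d → ℝ) :
    1 / 64 * (1 - ∑ k, ∏ i, bump (s k i) (x i)) ≤ parab d x - envelope s x := by
  have hd' : (0 : ℝ) < 2 * d := by positivity
  have hnn : ∀ k, 0 ≤ ∏ i, bump (s k i) (x i) :=
    fun k => Finset.prod_nonneg fun i _ => bump_nonneg _ _
  by_cases h : ∃ k, ∑ i, (x i - s k i) ^ 2 ≤ d / 32
  · obtain ⟨k, hk⟩ := h
    have h1 : 1 ≤ ∏ i, bump (s k i) (x i) := by
      rw [prod_bump, Real.one_le_exp_iff]; linarith
    have h2 := Finset.single_le_sum (fun k _ => hnn k) (Finset.mem_univ k)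
    have h3 := envelope_le_parab s x
    linarith
  · push Not at h
    have h1 : envelope s x ≤ parab d x - 1 / 64 := by
      refine Finset.sup'_le _ _ fun k _ => ?_
      have h2 := parab_sub_tangentPlane (s k) x
      have h3 : 1 / 64 ≤ (∑ i, (x i - s k i) ^ 2) / (2 * (d : ℝ)) := by
        rw [le_div_iff₀ hd']
        linarith [h k]
      linarith
    have h2 : 0 ≤ ∑ k, ∏ i, bump (s k i) (x i) := Finset.sum_nonneg fun k _ => hnn k
    linarith

lemma integral_gap {d n : ℕ} [NeZero n] (hd : 1 ≤ d) (s : Fin n → Fin d → ℝ) :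
    1 / 64 * (1 - n * (10 / 11) ^ d) ≤
      (∫ x in Set.Icc (0 : Fin d → ℝ) 1, parab d x) -
        ∫ x in Set.Icc (0 : Fin d → ℝ) 1, envelope s x := by
  have hp : IntegrableOn (parab d) (Set.Icc (0 : Fin d → ℝ) 1) :=
    (continuous_parab d).continuousOn.integrableOn_compact isCompact_Icc
  have he : IntegrableOn (envelope s) (Set.Icc (0 : Fin d → ℝ) 1) :=
    (continuous_envelope s).continuousOn.integrableOn_compact isCompact_Icc
  have hb : ∀ k, IntegrableOn (fun x : Fin d → ℝ => ∏ i, bump (s k i) (x i))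
      (Set.Icc (0 : Fin d → ℝ) 1) := fun k => (integrable_prod_bump (s k)).integrableOn
  have hsum : IntegrableOn (fun x : Fin d → ℝ => ∑ k, ∏ i, bump (s k i) (x i))
      (Set.Icc (0 : Fin d → ℝ) 1) := integrable_finsetSum _ fun k _ => hb k
  have hone : IntegrableOn (fun _ : Fin d → ℝ => (1 : ℝ)) (Set.Icc (0 : Fin d → ℝ) 1) :=
    continuous_const.continuousOn.integrableOn_compact isCompact_Icc
  have hvol : ∫ _x in Set.Icc (0 : Fin d → ℝ) 1, (1 : ℝ) = 1 := by
    rw [setIntegral_const, measureReal_def, Real.volume_Icc_pi_toReal (zero_le_one : (0 : Fin d → ℝ) ≤ 1)]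
    simp
  have hle : ∑ k, ∫ x in Set.Icc (0 : Fin d → ℝ) 1, ∏ i, bump (s k i) (x i) ≤
      n * (10 / 11 : ℝ) ^ d := by
    calc _ ≤ ∑ _k : Fin n, (10 / 11 : ℝ) ^ d :=
          Finset.sum_le_sum fun k _ => setIntegral_prod_bump_le (s k)
      _ = _ := by simp
  rw [← integral_sub hp he]
  calc (1 / 64 : ℝ) * (1 - n * (10 / 11) ^ d)
      ≤ 1 / 64 * (1 - ∑ k, ∫ x in Set.Icc (0 : Fin d → ℝ) 1, ∏ i, bump (s k i) (x i)) := by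
        gcongr
    _ = ∫ x in Set.Icc (0 : Fin d → ℝ) 1, 1 / 64 * (1 - ∑ k, ∏ i, bump (s k i) (x i)) := by
        rw [integral_const_mul, integral_sub hone hsum, hvol, integral_finsetSum _ fun k _ => hb k]
    _ ≤ _ := integral_mono ((hone.sub hsum).const_mul _) (hp.sub he)
        fun x => gap_lower_bound hd s x

/-- If `g` agrees with `f` at all points where the algorithm samples `f`, then the algorithm makes
the same observations on `g`. -/
lemma infoValues_congr {d n : ℕ} (t : (k : Fin n) → (Fin k.1 → ℝ) → (Fin d → ℝ))
    (f g : (Fin d → ℝ) → ℝ)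
    (h : ∀ k : Fin n, g (t k fun j => infoValues t f ⟨j.1, j.2.trans k.2⟩) =
      f (t k fun j => infoValues t f ⟨j.1, j.2.trans k.2⟩)) :
    infoValues t g = infoValues t f := by
  have key : ∀ (m : ℕ) (hm : m < n), infoValues t g ⟨m, hm⟩ = infoValues t f ⟨m, hm⟩ := by
    intro m
    induction m using Nat.strong_induction_on with
    | _ m ih =>
      intro hm
      rw [infoValues, infoValues, ← h ⟨m, hm⟩]
      congr 2
      funext j
      exact ih j.1 j.2 _
  funext k
  exact key k.1 k.2

/-- there exists `ε₀ ∈ (0,1/2)`, independent of `d` and `n`, such that every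
adaptive algorithm using `n` function values has worst case error at least
`ε₀·(1 - (d+1)·n·(10/11)^d)` for integration over convex functions `f : [0,1]^d → [0,1]`. -/
theorem convex_integration_lower_bound :
    ∃ ε₀ : ℝ, ε₀ ∈ Set.Ioo (0 : ℝ) (1 / 2) ∧
      ∀ (d n : ℕ), 1 ≤ d → 1 ≤ n →
      ∀ (t : (k : Fin n) → (Fin k.1 → ℝ) → (Fin d → ℝ)),
        (∀ k y, t k y ∈ Set.Icc (0 : Fin d → ℝ) 1) →
      ∀ φ : (Fin n → ℝ) → ℝ,
        ∃ f : (Fin d → ℝ) → ℝ,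
          ConvexOn ℝ (Set.Icc (0 : Fin d → ℝ) 1) f ∧
          (∀ x ∈ Set.Icc (0 : Fin d → ℝ) 1, f x ∈ Set.Icc (0 : ℝ) 1) ∧
          |(∫ x in Set.Icc (0 : Fin d → ℝ) 1, f x) - φ (infoValues t f)| ≥
            ε₀ * (1 - (d + 1) * n * (10 / 11) ^ d) := by
  refine ⟨1 / 128, by norm_num, fun d n hd hn t ht φ => ?_⟩
  have : NeZero n := ⟨by omega⟩
  set s : Fin n → Fin d → ℝ :=
    fun k => t k fun j => infoValues t (parab d) ⟨j.1, j.2.trans k.2⟩ with hs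
  have hsmem : ∀ k, s k ∈ Set.Icc (0 : Fin d → ℝ) 1 := fun k => ht k _
  have hinfo : infoValues t (envelope s) = infoValues t (parab d) :=
    infoValues_congr t _ _ fun k => envelope_node s k
  have hgap := integral_gap hd s
  have hweak : (1 : ℝ) - (d + 1) * n * (10 / 11) ^ d ≤ 1 - n * (10 / 11) ^ d := by
    have : 0 ≤ (d : ℝ) * (n * (10 / 11) ^ d) := by positivity
    linarith
  by_cases hcase : |(∫ x in Set.Icc (0 : Fin d → ℝ) 1, parab d x) - φ (infoValues t (parab d))| ≥
      1 / 128 * (1 - (d + 1) * n * (10 / 11) ^ d)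
  · exact ⟨parab d, convexOn_parab d, fun x hx => parab_mem hd hx, hcase⟩
  · refine ⟨envelope s, convexOn_envelope s, fun x hx => ⟨?_, ?_⟩, ?_⟩
    · exact (tangentPlane_nonneg hd (hsmem 0) hx).trans (tangentPlane_le_envelope s x 0)
    · exact (envelope_le_parab s x).trans (parab_mem hd hx).2
    · rw [hinfo]
      have h1 := le_abs_self
        ((∫ x in Set.Icc (0 : Fin d → ℝ) 1, parab d x) - φ (infoValues t (parab d)))
      have h2 := neg_abs_le
        ((∫ x in Set.Icc (0 : Fin d → ℝ) 1, envelope s x) - φ (infoValues t (parab d)))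
      linarith
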